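/- Let L and S be positive integers with S = L+1, let γ ∈ (0,1) be the positive root of Lγ + Sγ² = 1, and let (ξ^j)_{j≥1} be the (L,S)-sequence of points. For each N, let P_{L,S}(N) = { ((n−1)/N, ξⁿ) : n = 1, …, N } be the (L,S)-point set à la van der Corput of order N. Then there exists a constant C₂ > 0 such that for every integer N ≥ 2 one has N · D₂(P_{L,S}(N)) ≤ C₂ · (log N)². -/

import Mathlib

open Finset Real

noncomputable section

/-- The `k`-th digit of `n` in base `b`. -/
def lsDigit (b n k : ℕ) : ℕ := n / b ^ k % b

/-- Membership in the set `N_{L,S}`: for every `k`, the pair of consecutive digits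
`(a_k(n), a_{k+1}(n))` in base `L+S` does not lie in
`{L,…,L+S−1} × {1,…,L+S−1}`. -/
def memNLS (L S n : ℕ) : Prop :=
  ∀ k : ℕ, ¬ (L ≤ lsDigit (L + S) n k ∧ lsDigit (L + S) n k ≤ L + S - 1 ∧
      1 ≤ lsDigit (L + S) n (k + 1) ∧ lsDigit (L + S) n (k + 1) ≤ L + S - 1)

/-- The modified digit `ã`: `ã = a` if `a ≤ L−1`, and `ã = L + γ(a−L)` if `L ≤ a`. -/
def lsTilde (L : ℕ) (γ : ℝ) (a : ℕ) : ℝ :=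
  if a < L then (a : ℝ) else (L : ℝ) + γ * ((a : ℝ) - (L : ℝ))

/-- The radical-inverse-type function `φ_{L,S}(n) = Σ_{k=0}^{M} ã_k(n) γ^{k+1}`,
with `M = ⌊log_{L+S} n⌋`. -/
def lsPhi (L S : ℕ) (γ : ℝ) (n : ℕ) : ℝ :=
  ∑ k ∈ Finset.range (Nat.log (L + S) n + 1),
    lsTilde L γ (lsDigit (L + S) n k) * γ ^ (k + 1)

/-- The `(L,S)`-sequence of points: `ξ^j = φ_{L,S}(n_j)` where `n_1 < n_2 < ⋯`
is the increasing enumeration of `N_{L,S}` (so `n_j = Nat.nth (memNLS L S) (j-1)`). -/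
def lsSeq (L S : ℕ) (γ : ℝ) (j : ℕ) : ℝ :=
  lsPhi L S γ (Nat.nth (memNLS L S) (j - 1))

/-- One-dimensional discrepancy of the first `N` terms `x 1, …, x N` of a sequence:
`sup_{0 ≤ a < b ≤ 1} |(1/N) Σ_{j=1}^N χ_{[a,b)}(x j) − (b−a)|`. -/
def discrep (x : ℕ → ℝ) (N : ℕ) : ℝ :=
  ⨆ p : {p : ℝ × ℝ // 0 ≤ p.1 ∧ p.1 < p.2 ∧ p.2 ≤ 1},
    |(∑ j ∈ Finset.Icc 1 N,
        Set.indicator (Set.Ico p.1.1 p.1.2) (fun _ => (1 : ℝ)) (x j)) / N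
      - (p.1.2 - p.1.1)|

/-- Two-dimensional (star) discrepancy of the first `N` terms of a sequence of points
in the unit square:
`sup_{0 < a ≤ 1, 0 < b ≤ 1} |(1/N) Σ_{j=1}^N χ_{[0,a)×[0,b)}(x j) − ab|`. -/
def discrep2 (x : ℕ → ℝ × ℝ) (N : ℕ) : ℝ :=
  ⨆ p : {p : ℝ × ℝ // 0 < p.1 ∧ p.1 ≤ 1 ∧ 0 < p.2 ∧ p.2 ≤ 1},
    |(∑ j ∈ Finset.Icc 1 N,
        Set.indicator (Set.Ico (0 : ℝ) p.1.1) (fun _ => (1 : ℝ)) (x j).1 *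
        Set.indicator (Set.Ico (0 : ℝ) p.1.2) (fun _ => (1 : ℝ)) (x j).2) / N
      - p.1.1 * p.1.2|

section

variable {L S : ℕ} {γ : ℝ}

/-!
The numbers of `N_{L,S}` with lowest digit `a` form an affine copy of `N_{L,S}`, and their points an
affine copy of the whole sequence, scaled by `γ` if `a < L` and by `γ ^ 2` otherwise. Peeling off
the digit of the interval containing `x` therefore reduces the local discrepancy at `x` below `X` to
one of the same kind below roughly `X / (L + S)`, at the cost of finitely many errors which compare
the numbers of elements of `N_{L,S}` below `X / (L + S)`, `X / (L + S) ^ 2` and `X`. Those errors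
are linear in the number of digits as soon as `S * γ ≤ 1`, that is `S ≤ L + 1`, and adding them up
over all digits gives `(log N) ^ 2`. The discrepancy of the point set is controlled by the local
discrepancies of the initial segments of the sequence.
-/

/-! ### Digits and the set `N_{L,S}` -/

lemma lsDigit_add_mul_zero {b a : ℕ} (ha : a < b) (n : ℕ) : lsDigit b (a + b * n) 0 = a := by
  simp [lsDigit, Nat.mod_eq_of_lt ha]

lemma lsDigit_add_mul_succ {b a : ℕ} (ha : a < b) (n k : ℕ) :
    lsDigit b (a + b * n) (k + 1) = lsDigit b n k := by
  simp [lsDigit, pow_succ', ← Nat.div_div_eq_div_mul, Nat.add_mul_div_left a n (by omega : 0 < b),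
    Nat.div_eq_of_lt ha]

lemma lsDigit_zero_iff_dvd {b n : ℕ} : lsDigit b n 0 = 0 ↔ b ∣ n := by
  simp [lsDigit, Nat.dvd_iff_mod_eq_zero]

lemma memNLS_iff (hb : 0 < L + S) (n : ℕ) :
    memNLS L S n ↔ ∀ k, lsDigit (L + S) n k < L ∨ lsDigit (L + S) n (k + 1) = 0 := by
  refine forall_congr' fun k ↦ ?_
  have h₀ : lsDigit (L + S) n k < L + S := Nat.mod_lt _ hb
  have h₁ : lsDigit (L + S) n (k + 1) < L + S := Nat.mod_lt _ hb
  omega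

lemma memNLS_zero (L S : ℕ) : memNLS L S 0 := by
  intro k
  simp [lsDigit]

lemma memNLS_add_mul {a : ℕ} (ha : a < L + S) (n : ℕ) :
    memNLS L S (a + (L + S) * n) ↔ (a < L ∨ (L + S) ∣ n) ∧ memNLS L S n := by
  have hb : 0 < L + S := by omega
  rw [memNLS_iff hb, memNLS_iff hb, ← Nat.and_forall_add_one]
  simp only [lsDigit_add_mul_zero ha, lsDigit_add_mul_succ ha, lsDigit_zero_iff_dvd]

lemma memNLS_mul (hL : 0 < L) (S n : ℕ) : memNLS L S ((L + S) * n) ↔ memNLS L S n := by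
  have h := memNLS_add_mul (L := L) (S := S) (a := 0) (by omega) n
  simpa [hL] using h

lemma memNLS_pow (hL : 0 < L) (hb : 1 < L + S) (k : ℕ) : memNLS L S ((L + S) ^ k) := by
  induction k with
  | zero => simpa [memNLS_zero L S] using memNLS_add_mul (L := L) (S := S) hb 0
  | succ k ih => rwa [pow_succ', memNLS_mul hL]

lemma infinite_memNLS (hL : 0 < L) (hb : 1 < L + S) : (Set.ofPred (memNLS L S)).Infinite :=
  Set.infinite_of_injective_forall_mem (Nat.pow_right_injective hb) (memNLS_pow hL hb)

/-- The numbers of `N_{L,S}` with lowest digit `a` are `a + lsShift L S a * m` with `m ∈ N_{L,S}`: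
a digit `a ≥ L` forces the next digit to be `0`, so that it uses up two digits. -/
def lsShift (L S a : ℕ) : ℕ := if a < L then L + S else (L + S) * (L + S)

lemma le_lsShift (L S a : ℕ) : L + S ≤ lsShift L S a := by
  unfold lsShift
  split_ifs
  · exact le_rfl
  · exact Nat.le_mul_self _

lemma memNLS_add_lsShift_mul {a : ℕ} (hL : 0 < L) (ha : a < L + S) (m : ℕ) :
    memNLS L S (a + lsShift L S a * m) ↔ memNLS L S m := by
  unfold lsShift
  split_ifs with h
  · simp [memNLS_add_mul ha, h]
  · simp [mul_assoc, memNLS_add_mul ha, memNLS_mul hL]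

lemma add_lsShift_mul_mod {a : ℕ} (ha : a < L + S) (m : ℕ) :
    (a + lsShift L S a * m) % (L + S) = a := by
  unfold lsShift
  split_ifs <;> simp [mul_assoc, Nat.mod_eq_of_lt ha]

lemma memNLS.exists_eq_add_lsShift_mul {n : ℕ} (hb : 0 < L + S) (hn : memNLS L S n) :
    ∃ m, n = n % (L + S) + lsShift L S (n % (L + S)) * m := by
  have hdiv := Nat.mod_add_div n (L + S)
  rw [← hdiv, memNLS_add_mul (Nat.mod_lt _ hb)] at hn
  by_cases h : n % (L + S) < L
  · exact ⟨n / (L + S), by rw [lsShift, if_pos h, hdiv]⟩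
  · obtain ⟨m, hm⟩ := hn.1.resolve_left h
    exact ⟨m, by rw [lsShift, if_neg h, mul_assoc, ← hm, hdiv]⟩

/-! ### The intervals of points with a given lowest digit -/

/-- The length of the interval `lsLeft L γ a + [0, lsLen L γ a)` swept by the points of the
`(L,S)`-sequence with lowest digit `a`. -/
def lsLen (L : ℕ) (γ : ℝ) (a : ℕ) : ℝ := if a < L then γ else γ ^ 2

/-- The left endpoint of the interval swept by the points with lowest digit `a`. -/
def lsLeft (L : ℕ) (γ : ℝ) (a : ℕ) : ℝ := lsTilde L γ a * γ

lemma lsTilde_zero (L : ℕ) (γ : ℝ) : lsTilde L γ 0 = 0 := by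
  unfold lsTilde
  split_ifs with h
  · simp
  · simp [Nat.eq_zero_of_not_pos h]

lemma lsTilde_nonneg (L a : ℕ) (hγ : 0 ≤ γ) : 0 ≤ lsTilde L γ a := by
  unfold lsTilde
  split_ifs with h
  · positivity
  · have : (0 : ℝ) ≤ a - L := sub_nonneg.2 (Nat.cast_le.2 (not_lt.1 h))
    positivity

lemma lsLeft_zero (L : ℕ) (γ : ℝ) : lsLeft L γ 0 = 0 := by
  rw [lsLeft, lsTilde_zero, zero_mul]

lemma lsLeft_base (L S : ℕ) (γ : ℝ) : lsLeft L γ (L + S) = L * γ + S * γ ^ 2 := by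
  rw [lsLeft, lsTilde, if_neg (by omega)]
  push_cast
  ring

lemma lsLeft_succ (L : ℕ) (γ : ℝ) (a : ℕ) : lsLeft L γ (a + 1) = lsLeft L γ a + lsLen L γ a := by
  unfold lsLeft lsLen lsTilde
  rcases lt_trichotomy (a + 1) L with h | rfl | h
  · rw [if_pos h, if_pos (by omega), if_pos (by omega)]
    push_cast
    ring
  · rw [if_neg (by omega), if_pos (by omega), if_pos (by omega)]
    push_cast
    ring
  · rw [if_neg (by omega), if_neg (by omega), if_neg (by omega)]
    push_cast
    ring

lemma lsLen_pos (L a : ℕ) (hγ : 0 < γ) : 0 < lsLen L γ a := by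
  unfold lsLen
  split_ifs <;> positivity

lemma monotone_lsLeft (L : ℕ) (hγ : 0 < γ) : Monotone (lsLeft L γ) :=
  monotone_nat_of_le_succ fun a ↦ by
    rw [lsLeft_succ]
    exact le_add_of_nonneg_right (lsLen_pos L a hγ).le

lemma sum_range_lsLen (L : ℕ) (γ : ℝ) (a : ℕ) : ∑ c ∈ range a, lsLen L γ c = lsLeft L γ a := by
  induction a with
  | zero => simp [lsLeft_zero]
  | succ a ih => rw [sum_range_succ, ih, lsLeft_succ]

lemma exists_eq_lsLeft_add_lsLen_mul (hγ : 0 < γ) (hroot : L * γ + S * γ ^ 2 = 1) {x : ℝ}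
    (hx : x ∈ Set.Ioc 0 1) :
    ∃ a < L + S, ∃ y ∈ Set.Ioc (0 : ℝ) 1, x = lsLeft L γ a + lsLen L γ a * y := by
  rw [← hroot, ← lsLeft_base, ← lsLeft_zero L γ,
    ← (monotone_lsLeft L hγ).biUnion_Ico_Ioc_map_succ] at hx
  simp only [Set.mem_iUnion, Set.mem_Ico, Set.mem_Ioc, Nat.succ_eq_succ, lsLeft_succ,
    exists_prop] at hx
  obtain ⟨a, ⟨-, ha⟩, hax, hxa⟩ := hx
  have hlen := lsLen_pos L a hγ
  refine ⟨a, ha, (x - lsLeft L γ a) / lsLen L γ a, ⟨?_, ?_⟩, ?_⟩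
  · exact div_pos (sub_pos.2 hax) hlen
  · rw [div_le_one hlen]
    linarith
  · rw [mul_div_cancel₀ _ hlen.ne']
    ring

lemma lsPhi_eq_sum_range (hb : 1 < L + S) (γ : ℝ) {n K : ℕ} (hK : n < (L + S) ^ K) :
    lsPhi L S γ n = ∑ k ∈ range K, lsTilde L γ (lsDigit (L + S) n k) * γ ^ (k + 1) := by
  have eq_zero_of_lt : ∀ k, n < (L + S) ^ k →
      lsTilde L γ (lsDigit (L + S) n k) * γ ^ (k + 1) = 0 := fun k hk ↦ by
    simp [lsDigit, Nat.div_eq_of_lt hk, lsTilde_zero]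
  have hlog := Nat.lt_pow_succ_log_self hb n
  refine Finset.sum_congr_of_eq_on_inter ?_ ?_ fun _ _ _ ↦ rfl
  · exact fun k _ hk ↦ eq_zero_of_lt k
      (hK.trans_le (Nat.pow_le_pow_right (by omega) (by simpa using hk)))
  · exact fun k _ hk ↦ eq_zero_of_lt k
      (hlog.trans_le (Nat.pow_le_pow_right (by omega) (by simpa using hk)))

lemma lsPhi_zero (L S : ℕ) (γ : ℝ) : lsPhi L S γ 0 = 0 := by
  simp [lsPhi, lsDigit, lsTilde_zero]

lemma lsPhi_add_mul {a : ℕ} (hb : 1 < L + S) (γ : ℝ) (ha : a < L + S) (n : ℕ) :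
    lsPhi L S γ (a + (L + S) * n) = lsLeft L γ a + γ * lsPhi L S γ n := by
  have hn : n < (L + S) ^ n := Nat.lt_pow_self hb
  have hn' : a + (L + S) * n < (L + S) ^ (n + 1) := by
    rw [pow_succ']
    nlinarith
  rw [lsPhi_eq_sum_range hb γ hn', lsPhi_eq_sum_range hb γ hn, sum_range_succ', add_comm, mul_sum]
  simp only [lsDigit_add_mul_zero ha, lsDigit_add_mul_succ ha, lsLeft, zero_add, pow_one]
  congr 1
  exact sum_congr rfl fun k _ ↦ by ring

lemma lsPhi_add_lsShift_mul {a : ℕ} (hb : 1 < L + S) (γ : ℝ) (ha : a < L + S) (m : ℕ) :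
    lsPhi L S γ (a + lsShift L S a * m) = lsLeft L γ a + lsLen L γ a * lsPhi L S γ m := by
  unfold lsShift lsLen
  split_ifs with h
  · exact lsPhi_add_mul hb γ ha m
  · have hzero := lsPhi_add_mul (a := 0) hb γ (by omega) m
    rw [zero_add, lsLeft_zero, zero_add] at hzero
    rw [mul_assoc, lsPhi_add_mul hb γ ha, hzero]
    ring

lemma lsPhi_nonneg (L S : ℕ) (hγ : 0 ≤ γ) (n : ℕ) : 0 ≤ lsPhi L S γ n :=
  sum_nonneg fun _ _ ↦ mul_nonneg (lsTilde_nonneg L _ hγ) (pow_nonneg hγ _)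

lemma lsPhi_add_lsShift_mul_lt_iff {a m : ℕ} (hb : 1 < L + S) (hγ : 0 < γ) (ha : a < L + S)
    {y : ℝ} : lsPhi L S γ (a + lsShift L S a * m) < lsLeft L γ a + lsLen L γ a * y ↔
      lsPhi L S γ m < y := by
  rw [lsPhi_add_lsShift_mul hb γ ha, add_lt_add_iff_left, mul_lt_mul_iff_right₀ (lsLen_pos L a hγ)]

lemma lsPhi_add_lsShift_mul_lt {a m : ℕ} (hb : 1 < L + S) (hγ : 0 < γ) (ha : a < L + S)
    (hm : lsPhi L S γ m < 1) :
    lsPhi L S γ (a + lsShift L S a * m) < lsLeft L γ (a + 1) := by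
  rw [lsLeft_succ, ← mul_one (lsLen L γ a)]
  exact (lsPhi_add_lsShift_mul_lt_iff hb hγ ha).2 hm

lemma lsPhi_add_lsShift_mul_lt_lsLeft_add {a c m : ℕ} (hb : 1 < L + S) (hγ : 0 < γ)
    (ha : a < L + S) (hca : c < a) (hm : lsPhi L S γ m < 1) {y : ℝ} (hy : 0 ≤ y) :
    lsPhi L S γ (c + lsShift L S c * m) < lsLeft L γ a + lsLen L γ a * y :=
  calc lsPhi L S γ (c + lsShift L S c * m)
      < lsLeft L γ (c + 1) := lsPhi_add_lsShift_mul_lt hb hγ (hca.trans ha) hm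
    _ ≤ lsLeft L γ a := monotone_lsLeft L hγ hca
    _ ≤ lsLeft L γ a + lsLen L γ a * y :=
        le_add_of_nonneg_right (mul_nonneg (lsLen_pos L a hγ).le hy)

lemma lsLeft_add_le_lsPhi_add_lsShift_mul {a c : ℕ} (hb : 1 < L + S) (hγ : 0 < γ)
    (hc : c < L + S) (hac : a < c) {y : ℝ} (hy : y ≤ 1) (m : ℕ) :
    lsLeft L γ a + lsLen L γ a * y ≤ lsPhi L S γ (c + lsShift L S c * m) :=
  calc lsLeft L γ a + lsLen L γ a * y
      ≤ lsLeft L γ (a + 1) := by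
        rw [lsLeft_succ]
        gcongr
        exact mul_le_of_le_one_right (lsLen_pos L a hγ).le hy
    _ ≤ lsLeft L γ c := monotone_lsLeft L hγ hac
    _ ≤ lsLeft L γ c + lsLen L γ c * lsPhi L S γ m :=
        le_add_of_nonneg_right (mul_nonneg (lsLen_pos L c hγ).le (lsPhi_nonneg L S hγ.le m))
    _ = lsPhi L S γ (c + lsShift L S c * m) := (lsPhi_add_lsShift_mul hb γ hc m).symm

lemma lsPhi_lt_one (hL : 0 < L) (hb : 1 < L + S) (hγ : 0 < γ) (hroot : L * γ + S * γ ^ 2 = 1)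
    {n : ℕ} (hn : memNLS L S n) : lsPhi L S γ n < 1 := by
  induction n using Nat.strong_induction_on with
  | _ n ih =>
    rcases n.eq_zero_or_pos with rfl | hpos
    · simp [lsPhi_zero]
    obtain ⟨m, hm⟩ := hn.exists_eq_add_lsShift_mul (by omega)
    have ha : n % (L + S) < L + S := Nat.mod_lt _ (by omega)
    generalize n % (L + S) = a at hm ha
    subst hm
    have hm : m < a + lsShift L S a * m := by nlinarith [le_lsShift L S a]
    calc lsPhi L S γ (a + lsShift L S a * m)
        < lsLeft L γ (a + 1) := lsPhi_add_lsShift_mul_lt hb hγ ha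
          (ih m hm ((memNLS_add_lsShift_mul hL ha m).1 hn))
      _ ≤ lsLeft L γ (L + S) := monotone_lsLeft L hγ ha
      _ = 1 := by rw [lsLeft_base, hroot]

/-! ### Counting by lowest digit -/

/-- The number of `m` with `a + lsShift L S a * m < X`. -/
def lsChild (L S X a : ℕ) : ℕ := (X - a) ⌈/⌉ lsShift L S a

lemma lt_lsChild_iff (hb : 0 < L + S) {X a m : ℕ} :
    m < lsChild L S X a ↔ a + lsShift L S a * m < X := by
  rw [← not_le, lsChild, ceilDiv_le_iff_le_mul (hb.trans_le (le_lsShift L S a))]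
  omega

lemma div_lsShift_le_lsChild {a : ℕ} (ha : a < L + S) (X : ℕ) :
    X / lsShift L S a ≤ lsChild L S X a := by
  refine le_of_forall_lt fun m hm ↦ ?_
  rw [lt_lsChild_iff (by omega)]
  have := le_lsShift L S a
  have := (Nat.le_div_iff_mul_le (by omega)).1 (Nat.succ_le_of_lt hm)
  nlinarith

lemma lsChild_le_div_lsShift_add_one (hb : 0 < L + S) (X a : ℕ) :
    lsChild L S X a ≤ X / lsShift L S a + 1 := by
  by_contra! h
  rw [lt_lsChild_iff hb] at h
  have := Nat.lt_mul_div_succ X (hb.trans_le (le_lsShift L S a))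
  omega

lemma lsChild_le_pow {M X : ℕ} (hb : 0 < L + S) (hX : X ≤ (L + S) ^ (M + 1)) (a : ℕ) :
    lsChild L S X a ≤ (L + S) ^ M := by
  by_contra! h
  rw [lt_lsChild_iff hb] at h
  have : (L + S) ^ (M + 1) ≤ lsShift L S a * (L + S) ^ M := by
    rw [pow_succ']
    gcongr
    exact le_lsShift L S a
  omega

lemma count_eq_sum_count_lsChild (hb : 0 < L + S) {p : ℕ → Prop} [DecidablePred p]
    (hp : ∀ n, p n → memNLS L S n) (X : ℕ) : Nat.count p X =
      ∑ a ∈ range (L + S), Nat.count (fun m ↦ p (a + lsShift L S a * m)) (lsChild L S X a) := by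
  rw [Nat.count_eq_card_filter_range, card_eq_sum_card_fiberwise (f := (· % (L + S)))
    fun n _ ↦ mem_coe.2 (mem_range.2 (Nat.mod_lt n hb))]
  refine sum_congr rfl fun a ha ↦ ?_
  rw [mem_range] at ha
  rw [Nat.count_eq_card_filter_range]
  refine (card_nbij (fun m ↦ a + lsShift L S a * m) ?_ ?_ ?_).symm
  · intro m hm
    simpa [lt_lsChild_iff hb, add_lsShift_mul_mod ha] using hm
  · intro m _ m' _ h
    exact Nat.eq_of_mul_eq_mul_left (hb.trans_le (le_lsShift L S a)) (Nat.add_left_cancel h)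
  · intro n hn
    simp only [coe_filter, mem_filter, mem_range, Set.mem_ofPred_eq] at hn
    obtain ⟨⟨hnX, hpn⟩, rfl⟩ := hn
    obtain ⟨m, hm⟩ := (hp n hpn).exists_eq_add_lsShift_mul hb
    refine ⟨m, ?_, hm.symm⟩
    simp only [coe_filter, mem_range, Set.mem_ofPred_eq, lt_lsChild_iff hb]
    rw [← hm]
    exact ⟨hnX, hpn⟩

open scoped Classical in
/-- The number of elements of `N_{L,S}` below `X`. -/
def lsCount (L S X : ℕ) : ℕ := Nat.count (memNLS L S) X

lemma monotone_lsCount (L S : ℕ) : Monotone (lsCount L S) := by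
  classical exact Nat.count_monotone _

lemma lsCount_zero (L S : ℕ) : lsCount L S 0 = 0 := by
  classical exact Nat.count_zero _

lemma lsCount_one (L S : ℕ) : lsCount L S 1 = 1 := by
  simp [lsCount, Nat.count_one, memNLS_zero]

lemma lsCount_succ_le (L S X : ℕ) : lsCount L S (X + 1) ≤ lsCount L S X + 1 := by
  rw [lsCount, lsCount, Nat.count_succ]
  gcongr
  split_ifs <;> simp

lemma lsCount_nth (hL : 0 < L) (hb : 1 < L + S) (m : ℕ) :
    lsCount L S (Nat.nth (memNLS L S) m) = m := by
  classical exact Nat.count_nth_of_infinite (infinite_memNLS hL hb) m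

lemma nth_memNLS_lt_of_lt_lsCount {m X : ℕ} (h : m < lsCount L S X) :
    Nat.nth (memNLS L S) m < X := by
  classical exact Nat.nth_lt_of_lt_count h

lemma lsCount_eq_sum_lsChild (hL : 0 < L) (X : ℕ) :
    lsCount L S X = ∑ a ∈ range (L + S), lsCount L S (lsChild L S X a) := by
  classical
  rw [lsCount, count_eq_sum_count_lsChild (by omega) fun _ ↦ id]
  refine sum_congr rfl fun a ha ↦ ?_
  simp only [memNLS_add_lsShift_mul hL (mem_range.1 ha), lsCount]

lemma lsCount_div_lsShift_le {a : ℕ} (ha : a < L + S) (X : ℕ) :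
    lsCount L S (X / lsShift L S a) ≤ lsCount L S (lsChild L S X a) :=
  monotone_lsCount L S (div_lsShift_le_lsChild ha X)

lemma lsCount_lsChild_le (hb : 0 < L + S) (X a : ℕ) :
    lsCount L S (lsChild L S X a) ≤ lsCount L S (X / lsShift L S a) + 1 :=
  (monotone_lsCount L S (lsChild_le_div_lsShift_add_one hb X a)).trans (lsCount_succ_le L S _)

lemma sum_lsCount_div_lsShift (L S X : ℕ) : ∑ a ∈ range (L + S), lsCount L S (X / lsShift L S a) =
      L * lsCount L S (X / (L + S)) + S * lsCount L S (X / (L + S) / (L + S)) := by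
  rw [sum_range_add]
  congr 1
  · rw [sum_congr rfl fun a ha ↦ by rw [lsShift, if_pos (mem_range.1 ha)]]
    simp
  · simp [lsShift, Nat.div_div_eq_div_mul]

lemma le_lsCount (hL : 0 < L) (X : ℕ) :
    L * lsCount L S (X / (L + S)) + S * lsCount L S (X / (L + S) / (L + S)) ≤ lsCount L S X := by
  rw [← sum_lsCount_div_lsShift, lsCount_eq_sum_lsChild hL X]
  exact sum_le_sum fun a ha ↦ lsCount_div_lsShift_le (mem_range.1 ha) X

lemma lsCount_le (hL : 0 < L) (X : ℕ) :
    lsCount L S X ≤ L * lsCount L S (X / (L + S)) + S * lsCount L S (X / (L + S) / (L + S)) +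
      (L + S) := by
  rw [← sum_lsCount_div_lsShift, lsCount_eq_sum_lsChild hL X]
  calc ∑ a ∈ range (L + S), lsCount L S (lsChild L S X a)
      ≤ ∑ a ∈ range (L + S), (lsCount L S (X / lsShift L S a) + 1) :=
        sum_le_sum fun a _ ↦ lsCount_lsChild_le (by omega) X a
    _ = _ := by simp [sum_add_distrib]

/-! ### Growth of the count and its deviation from proportionality -/

lemma inv_pow_le_lsCount (hL : 0 < L) (hb : 1 < L + S) (hγ0 : 0 < γ) (hγ1 : γ ≤ 1)
    (hroot : L * γ + S * γ ^ 2 = 1) (k : ℕ) : γ⁻¹ ^ k ≤ lsCount L S ((L + S) ^ (k + 1)) := by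
  have hdiv : ∀ j, (L + S) ^ (j + 1) / (L + S) = (L + S) ^ j := fun j ↦ by
    rw [pow_succ, Nat.mul_div_cancel _ (by omega)]
  have hrec : ∀ j, (L : ℝ) * lsCount L S ((L + S) ^ (j + 1)) + S * lsCount L S ((L + S) ^ j) ≤
      lsCount L S ((L + S) ^ (j + 2)) := fun j ↦ by
    have h := le_lsCount (S := S) hL ((L + S) ^ (j + 2))
    rw [hdiv (j + 1), hdiv j] at h
    exact_mod_cast h
  have hone : (1 : ℝ) ≤ lsCount L S ((L + S) ^ 1) := by
    have h := monotone_lsCount L S (show 1 ≤ (L + S) ^ 1 by simpa using hb.le)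
    rw [lsCount_one] at h
    exact_mod_cast h
  have hinv : γ⁻¹ = L + S * γ := by
    refine inv_eq_of_mul_eq_one_left ?_
    linear_combination hroot
  induction k using Nat.twoStepInduction with
  | zero => simpa using hone
  | one =>
    calc γ⁻¹ ^ 1 = L * 1 + S * γ := by rw [pow_one, hinv, mul_one]
      _ ≤ L * lsCount L S ((L + S) ^ 1) + S * 1 := by gcongr
      _ = L * lsCount L S ((L + S) ^ 1) + S * lsCount L S ((L + S) ^ 0) := by
        simp [lsCount_one]
      _ ≤ lsCount L S ((L + S) ^ 2) := hrec 0
  | more k ih₀ ih₁ =>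
    calc γ⁻¹ ^ (k + 2) = L * γ⁻¹ ^ (k + 1) + S * γ⁻¹ ^ k := by
          rw [pow_succ _ (k + 1)]
          nth_rewrite 2 [hinv]
          rw [pow_succ]
          field_simp
      _ ≤ L * lsCount L S ((L + S) ^ (k + 2)) + S * lsCount L S ((L + S) ^ (k + 1)) := by
        gcongr
      _ ≤ lsCount L S ((L + S) ^ (k + 3)) := hrec (k + 1)

-- With `b = L + S` and `e X = lsCount (X / b) - γ * lsCount X`, the recursion for `lsCount` reads
-- `e X = -(S * γ) * e (X / b) + O(1)`, so that `e` grows at most linearly in the number of digits.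
lemma abs_lsCount_div_sub_le (hL : 0 < L) (hb : 1 < L + S) (hγ0 : 0 < γ) (hγ1 : γ ≤ 1)
    (hroot : L * γ + S * γ ^ 2 = 1) (hSγ : S * γ ≤ 1) {M X : ℕ} (hX : X ≤ (L + S) ^ M) :
    |(lsCount L S (X / (L + S)) : ℝ) - γ * lsCount L S X| ≤ 2 * M + 1 := by
  induction M generalizing X with
  | zero =>
    rw [pow_zero] at hX
    have hcount : (lsCount L S X : ℝ) ≤ 1 := by
      exact_mod_cast (monotone_lsCount L S hX).trans_eq (lsCount_one L S)
    have hdiv : X / (L + S) = 0 := Nat.div_eq_of_lt (hX.trans_lt hb)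
    rw [hdiv, lsCount_zero, Nat.cast_zero, zero_sub, abs_neg, abs_of_nonneg (by positivity)]
    simpa using mul_le_one₀ hγ1 (by positivity) hcount
  | succ M ih =>
    have ih := ih (X := X / (L + S)) (Nat.div_le_of_le_mul (by rwa [← pow_succ']))
    have hlower : L * lsCount L S (X / (L + S)) + S * lsCount L S (X / (L + S) / (L + S)) ≤
        (lsCount L S X : ℝ) := by exact_mod_cast le_lsCount hL X
    have hupper : (lsCount L S X : ℝ) ≤ L * lsCount L S (X / (L + S)) +
        S * lsCount L S (X / (L + S) / (L + S)) + (L + S) := by exact_mod_cast lsCount_le hL X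
    set c₀ := (lsCount L S X : ℝ)
    set c₁ := (lsCount L S (X / (L + S)) : ℝ)
    set c₂ := (lsCount L S (X / (L + S) / (L + S)) : ℝ)
    have hrec : c₁ - γ * c₀ = -(S * γ * (c₂ - γ * c₁) + γ * (c₀ - (L * c₁ + S * c₂))) := by
      linear_combination (-c₁) * hroot
    calc |c₁ - γ * c₀|
        ≤ |S * γ * (c₂ - γ * c₁)| + |γ * (c₀ - (L * c₁ + S * c₂))| := by
          rw [hrec, abs_neg]
          exact abs_add_le _ _
      _ = S * γ * |c₂ - γ * c₁| + γ * (c₀ - (L * c₁ + S * c₂)) := by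
          rw [abs_mul, abs_of_nonneg (by positivity : 0 ≤ S * γ),
            abs_of_nonneg (mul_nonneg hγ0.le (sub_nonneg.2 hlower))]
      _ ≤ 1 * (2 * M + 1) + γ * (L + S) := by
          gcongr
          exact sub_le_iff_le_add'.2 hupper
      _ ≤ 2 * (M + 1 : ℕ) + 1 := by
          push_cast
          nlinarith [mul_nonneg (Nat.cast_nonneg (α := ℝ) S) (sq_nonneg γ)]

lemma abs_lsCount_div_lsShift_sub_le (hL : 0 < L) (hb : 1 < L + S) (hγ0 : 0 < γ) (hγ1 : γ ≤ 1)
    (hroot : L * γ + S * γ ^ 2 = 1) (hSγ : S * γ ≤ 1) {M X : ℕ} (hX : X ≤ (L + S) ^ M) (a : ℕ) :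
    |(lsCount L S (X / lsShift L S a) : ℝ) - lsLen L γ a * lsCount L S X| ≤ 4 * M + 2 := by
  have hX₀ := abs_lsCount_div_sub_le hL hb hγ0 hγ1 hroot hSγ hX
  have hX₁ := abs_lsCount_div_sub_le hL hb hγ0 hγ1 hroot hSγ
    ((Nat.div_le_self X (L + S)).trans hX)
  unfold lsShift lsLen
  split_ifs
  · linarith
  · rw [← Nat.div_div_eq_div_mul]
    set c₀ := (lsCount L S X : ℝ)
    set c₁ := (lsCount L S (X / (L + S)) : ℝ)
    set c₂ := (lsCount L S (X / (L + S) / (L + S)) : ℝ)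
    calc |c₂ - γ ^ 2 * c₀| = |(c₂ - γ * c₁) + γ * (c₁ - γ * c₀)| := by ring_nf
      _ ≤ |c₂ - γ * c₁| + |γ * (c₁ - γ * c₀)| := abs_add_le _ _
      _ = |c₂ - γ * c₁| + γ * |c₁ - γ * c₀| := by rw [abs_mul, abs_of_pos hγ0]
      _ ≤ (2 * M + 1) + 1 * (2 * M + 1) := by gcongr
      _ = 4 * M + 2 := by ring

lemma abs_lsCount_lsChild_sub_le {a : ℕ} (hL : 0 < L) (ha : a < L + S) (hb : 1 < L + S)
    (hγ0 : 0 < γ) (hγ1 : γ ≤ 1) (hroot : L * γ + S * γ ^ 2 = 1) (hSγ : S * γ ≤ 1) {M X : ℕ}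
    (hX : X ≤ (L + S) ^ M) :
    |(lsCount L S (lsChild L S X a) : ℝ) - lsLen L γ a * lsCount L S X| ≤ 4 * (M + 1) := by
  have hshift := abs_lsCount_div_lsShift_sub_le hL hb hγ0 hγ1 hroot hSγ hX a
  have hlower : (lsCount L S (X / lsShift L S a) : ℝ) ≤ lsCount L S (lsChild L S X a) :=
    Nat.cast_le.2 (lsCount_div_lsShift_le ha X)
  have hupper : (lsCount L S (lsChild L S X a) : ℝ) ≤ lsCount L S (X / lsShift L S a) + 1 := by
    exact_mod_cast lsCount_lsChild_le (by omega) X a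
  rw [abs_le] at hshift ⊢
  constructor <;> linarith

/-! ### The local discrepancy -/

open scoped Classical in
/-- The number of `n ∈ N_{L,S}` with `n < X` and `φ_{L,S}(n) < x`. -/
def lsCountBelow (L S : ℕ) (γ : ℝ) (X : ℕ) (x : ℝ) : ℕ :=
  Nat.count (fun n ↦ memNLS L S n ∧ lsPhi L S γ n < x) X

/-- The local discrepancy at `x` of the points `φ_{L,S}(n)` with `n ∈ N_{L,S}` and `n < X`, not
normalised by the number of these points. -/
def lsLocalDiscrep (L S : ℕ) (γ : ℝ) (X : ℕ) (x : ℝ) : ℝ :=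
  lsCountBelow L S γ X x - x * lsCount L S X

lemma lsCountBelow_le_lsCount (L S : ℕ) (γ : ℝ) (X : ℕ) (x : ℝ) :
    lsCountBelow L S γ X x ≤ lsCount L S X := by
  classical exact Nat.count_mono_left fun _ _ h ↦ h.1

lemma abs_lsLocalDiscrep_le_lsCount (L S : ℕ) (γ : ℝ) (X : ℕ) {x : ℝ} (hx : x ∈ Set.Icc 0 1) :
    |lsLocalDiscrep L S γ X x| ≤ lsCount L S X :=
  abs_sub_le_of_nonneg_of_le (by positivity) (Nat.cast_le.2 (lsCountBelow_le_lsCount L S γ X x))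
    (mul_nonneg hx.1 (by positivity)) (mul_le_of_le_one_left (by positivity) hx.2)

lemma lsCountBelow_lsLeft_add {a : ℕ} (hL : 0 < L) (ha : a < L + S) (hb : 1 < L + S)
    (hγ : 0 < γ) (hroot : L * γ + S * γ ^ 2 = 1) (X : ℕ) {y : ℝ} (hy : y ∈ Set.Ioc 0 1) :
    lsCountBelow L S γ X (lsLeft L γ a + lsLen L γ a * y) =
      ∑ c ∈ range a, lsCount L S (lsChild L S X c) + lsCountBelow L S γ (lsChild L S X a) y := by
  classical
  rw [lsCountBelow, count_eq_sum_count_lsChild (by omega) fun _ ↦ And.left,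
    ← sum_subset (range_subset_range.2 ha) fun c hc hca ↦ ?_, sum_range_succ]
  · congr 1
    · refine sum_congr rfl fun c hc ↦ ?_
      rw [mem_range] at hc
      have hiff : ∀ m, (memNLS L S (c + lsShift L S c * m) ∧
          lsPhi L S γ (c + lsShift L S c * m) < lsLeft L γ a + lsLen L γ a * y) ↔
            memNLS L S m := fun m ↦ by
        rw [memNLS_add_lsShift_mul hL (hc.trans ha)]
        exact and_iff_left_of_imp fun hm ↦ lsPhi_add_lsShift_mul_lt_lsLeft_add hb hγ ha hc
          (lsPhi_lt_one hL hb hγ hroot hm) hy.1.le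
      simp only [hiff, lsCount]
    · simp only [memNLS_add_lsShift_mul hL ha, lsPhi_add_lsShift_mul_lt_iff hb hγ ha,
        lsCountBelow]
  · simp only [mem_range, not_lt] at hc hca
    simp [not_lt.2 (lsLeft_add_le_lsPhi_add_lsShift_mul hb hγ hc hca hy.2 _)]

lemma lsLocalDiscrep_lsLeft_add {a : ℕ} (hL : 0 < L) (ha : a < L + S) (hb : 1 < L + S) (hγ : 0 < γ)
    (hroot : L * γ + S * γ ^ 2 = 1) (X : ℕ) {y : ℝ} (hy : y ∈ Set.Ioc 0 1) :
    lsLocalDiscrep L S γ X (lsLeft L γ a + lsLen L γ a * y) =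
      ∑ c ∈ range a, ((lsCount L S (lsChild L S X c) : ℝ) - lsLen L γ c * lsCount L S X) +
        y * (lsCount L S (lsChild L S X a) - lsLen L γ a * lsCount L S X) +
        lsLocalDiscrep L S γ (lsChild L S X a) y := by
  rw [lsLocalDiscrep, lsLocalDiscrep, lsCountBelow_lsLeft_add hL ha hb hγ hroot X hy,
    sum_sub_distrib, ← sum_mul, sum_range_lsLen]
  push_cast
  ring

lemma abs_lsLocalDiscrep_le (hL : 0 < L) (hb : 1 < L + S) (hγ0 : 0 < γ) (hγ1 : γ ≤ 1)
    (hroot : L * γ + S * γ ^ 2 = 1) (hSγ : S * γ ≤ 1) {M X : ℕ} (hX : X ≤ (L + S) ^ M) {x : ℝ}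
    (hx : x ∈ Set.Ioc 0 1) : |lsLocalDiscrep L S γ X x| ≤ 4 * (L + S : ℕ) * (M + 1) ^ 2 := by
  have hbR : (1 : ℝ) ≤ (L + S : ℕ) := by exact_mod_cast hb.le
  induction M generalizing X x with
  | zero =>
    have hcount : (lsCount L S X : ℝ) ≤ 1 := by
      exact_mod_cast (monotone_lsCount L S (by simpa using hX)).trans_eq (lsCount_one L S)
    have := abs_lsLocalDiscrep_le_lsCount L S γ X (Set.Ioc_subset_Icc_self hx)
    norm_num only [Nat.cast_zero]
    linarith
  | succ M ih =>
    obtain ⟨a, ha, y, hy, rfl⟩ := exists_eq_lsLeft_add_lsLen_mul hγ0 hroot hx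
    set d : ℕ → ℝ := fun c ↦ lsCount L S (lsChild L S X c) - lsLen L γ c * lsCount L S X
    have hdle : ∀ c < L + S, |d c| ≤ 4 * (M + 2) := fun c hc ↦ by
      refine (abs_lsCount_lsChild_sub_le hL hc hb hγ0 hγ1 hroot hSγ hX).trans_eq ?_
      push_cast
      ring
    have hsmaller : |∑ c ∈ range a, d c| ≤ a * (4 * (M + 2)) := by
      simpa using (abs_sum_le_sum_abs d _).trans
        (sum_le_card_nsmul _ _ _ fun c hc ↦ hdle c ((mem_range.1 hc).trans ha))
    have hequal : |y * d a| ≤ 4 * (M + 2) := by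
      rw [abs_mul, abs_of_pos hy.1]
      exact (mul_le_of_le_one_left (abs_nonneg _) hy.2).trans (hdle a ha)
    have haR : (a : ℝ) + 1 ≤ (L + S : ℕ) := by exact_mod_cast ha
    calc |lsLocalDiscrep L S γ X (lsLeft L γ a + lsLen L γ a * y)|
        ≤ |∑ c ∈ range a, d c| + |y * d a| + |lsLocalDiscrep L S γ (lsChild L S X a) y| := by
          rw [lsLocalDiscrep_lsLeft_add hL ha hb hγ0 hroot X hy]
          exact abs_add_three _ _ _
      _ ≤ a * (4 * (M + 2)) + 4 * (M + 2) + 4 * (L + S : ℕ) * (M + 1) ^ 2 := by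
          gcongr
          exact ih (lsChild_le_pow (by omega) hX a) hy
      _ = (a + 1) * (4 * (M + 2)) + 4 * (L + S : ℕ) * (M + 1) ^ 2 := by ring
      _ ≤ (L + S : ℕ) * (4 * (M + 2)) + 4 * (L + S : ℕ) * (M + 1) ^ 2 := by gcongr
      _ ≤ 4 * (L + S : ℕ) * ((M + 1 : ℕ) + 1) ^ 2 := by
          push_cast
          nlinarith [Nat.cast_nonneg (α := ℝ) M]

/-! ### From the sequence to the point set -/

lemma sum_range_nth {α : Type*} [AddCommMonoid α] {p : ℕ → Prop} [DecidablePred p]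
    (hp : (Set.ofPred p).Infinite) (f : ℕ → α) (m : ℕ) :
    ∑ i ∈ range m, f (Nat.nth p i) = ∑ n ∈ range (Nat.nth p m) with p n, f n := by
  induction m with
  | zero =>
    rw [card_eq_zero.1 ((Nat.count_eq_card_filter_range p _).symm.trans (Nat.count_nth_zero p))]
    simp
  | succ m ih =>
    rw [sum_range_succ_comm, Nat.filter_range_nth_eq_insert_of_infinite hp,
      sum_insert (by simp), ih]

lemma sum_Icc_indicator_lsSeq (hL : 0 < L) (hb : 1 < L + S) (hγ : 0 ≤ γ) (m : ℕ) (y : ℝ) :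
    ∑ j ∈ Icc 1 m, (Set.Ico 0 y).indicator (fun _ ↦ (1 : ℝ)) (lsSeq L S γ j) =
      lsCountBelow L S γ (Nat.nth (memNLS L S) m) y := by
  classical
  set f : ℕ → ℝ := fun n ↦ (Set.Ico 0 y).indicator (fun _ ↦ (1 : ℝ)) (lsPhi L S γ n) with hf
  calc ∑ j ∈ Icc 1 m, f (Nat.nth (memNLS L S) (j - 1))
      = ∑ i ∈ range m, f (Nat.nth (memNLS L S) i) :=
        sum_nbij' (· - 1) (· + 1) (by grind) (by grind) (by grind) (by grind) (by simp)
    _ = ∑ n ∈ range (Nat.nth (memNLS L S) m) with memNLS L S n, f n :=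
        sum_range_nth (infinite_memNLS hL hb) f m
    _ = lsCountBelow L S γ (Nat.nth (memNLS L S) m) y := by
        simp [hf, lsCountBelow, Nat.count_eq_card_filter_range, Set.indicator_apply,
          lsPhi_nonneg L S hγ, filter_filter]

lemma abs_sum_indicator_lsSeq_sub_le (hL : 0 < L) (hb : 1 < L + S) (hγ0 : 0 < γ) (hγ1 : γ ≤ 1)
    (hroot : L * γ + S * γ ^ 2 = 1) (hSγ : S * γ ≤ 1) {m n : ℕ} (hm : m < γ⁻¹ ^ (n + 1)) {y : ℝ}
    (hy : y ∈ Set.Ioc 0 1) :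
    |∑ j ∈ Icc 1 m, (Set.Ico 0 y).indicator (fun _ ↦ (1 : ℝ)) (lsSeq L S γ j) - m * y| ≤
      4 * (L + S : ℕ) * (n + 3) ^ 2 := by
  have hX : Nat.nth (memNLS L S) m ≤ (L + S) ^ (n + 2) :=
    (nth_memNLS_lt_of_lt_lsCount (Nat.cast_lt.1
      (hm.trans_le (inv_pow_le_lsCount hL hb hγ0 hγ1 hroot (n + 1))))).le
  calc |∑ j ∈ Icc 1 m, (Set.Ico 0 y).indicator (fun _ ↦ (1 : ℝ)) (lsSeq L S γ j) - m * y|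
      = |lsLocalDiscrep L S γ (Nat.nth (memNLS L S) m) y| := by
        rw [sum_Icc_indicator_lsSeq hL hb hγ0.le, lsLocalDiscrep, lsCount_nth hL hb, mul_comm y]
    _ ≤ 4 * (L + S : ℕ) * ((n + 2 : ℕ) + 1) ^ 2 :=
        abs_lsLocalDiscrep_le hL hb hγ0 hγ1 hroot hSγ hX hy
    _ = 4 * (L + S : ℕ) * (n + 3) ^ 2 := by push_cast; ring

lemma sum_indicator_div_mul_eq_sum_Icc_ceil {N : ℕ} (hN : 0 < N) {a : ℝ} (ha : a ≤ 1)
    (f : ℕ → ℝ) :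
    ∑ j ∈ Icc 1 N, (Set.Ico 0 a).indicator (fun _ ↦ (1 : ℝ)) (((j : ℝ) - 1) / N) * f j =
      ∑ j ∈ Icc 1 ⌈a * N⌉₊, f j := by
  have hNR : (0 : ℝ) < N := Nat.cast_pos.2 hN
  have hle : ⌈a * N⌉₊ ≤ N := Nat.ceil_le.2 (mul_le_of_le_one_left hNR.le ha)
  have hmem : ∀ j : ℕ, 1 ≤ j → (((j : ℝ) - 1) / N ∈ Set.Ico 0 a ↔ j ≤ ⌈a * N⌉₊) := by
    intro j hj
    obtain ⟨i, rfl⟩ := Nat.exists_eq_add_of_le' hj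
    rw [Nat.succ_le_iff, Nat.lt_ceil, ← div_lt_iff₀ hNR]
    simp [show (0 : ℝ) ≤ i / N by positivity]
  rw [← sum_subset (Icc_subset_Icc_right hle)]
  · refine sum_congr rfl fun j hj ↦ ?_
    rw [mem_Icc] at hj
    rw [Set.indicator_of_mem ((hmem j hj.1).2 hj.2), one_mul]
  · intro j hj hj'
    rw [mem_Icc] at hj hj'
    rw [Set.indicator_of_notMem fun h ↦ hj' ⟨hj.1, (hmem j hj.1).1 h⟩, zero_mul]

lemma mul_discrep2_div_le {N : ℕ} (hN : 0 < N) (x : ℕ → ℝ) {B : ℝ}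
    (hB : ∀ m ≤ N, ∀ y ∈ Set.Ioc (0 : ℝ) 1,
      |∑ j ∈ Icc 1 m, (Set.Ico 0 y).indicator (fun _ ↦ (1 : ℝ)) (x j) - m * y| ≤ B) :
    N * discrep2 (fun n ↦ (((n : ℝ) - 1) / N, x n)) N ≤ B + 1 := by
  have hNR : (0 : ℝ) < N := Nat.cast_pos.2 hN
  have hB0 : 0 ≤ B := (abs_nonneg _).trans (hB 0 N.zero_le 1 ⟨one_pos, le_rfl⟩)
  rw [mul_comm, ← le_div_iff₀ hNR]
  refine Real.iSup_le ?_ (by positivity)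
  rintro ⟨⟨a, y⟩, ha0, ha1, hy0, hy1⟩
  dsimp only at ha0 ha1 hy0 hy1 ⊢
  rw [sum_indicator_div_mul_eq_sum_Icc_ceil hN ha1
    fun j ↦ (Set.Ico 0 y).indicator (fun _ ↦ (1 : ℝ)) (x j)]
  have hcount := hB ⌈a * N⌉₊ (Nat.ceil_le.2 (mul_le_of_le_one_left hNR.le ha1)) y ⟨hy0, hy1⟩
  set count := ∑ j ∈ Icc 1 ⌈a * N⌉₊, (Set.Ico 0 y).indicator (fun _ ↦ (1 : ℝ)) (x j)
  have hround : |(⌈a * N⌉₊ - a * N) * y| ≤ 1 := by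
    rw [abs_mul, abs_of_pos hy0]
    refine mul_le_one₀ ?_ hy0.le hy1
    rw [abs_of_nonneg (sub_nonneg.2 (Nat.le_ceil _)), sub_le_iff_le_add']
    exact (Nat.ceil_lt_add_one (by positivity)).le
  calc |count / N - a * y| = |(count - ⌈a * N⌉₊ * y) + (⌈a * N⌉₊ - a * N) * y| / N := by
        rw [← abs_of_pos hNR, ← abs_div, abs_of_pos hNR]
        congr 1
        field_simp
        ring
    _ ≤ (B + 1) / N := by
        gcongr
        exact (abs_add_le _ _).trans (add_le_add hcount hround)

lemma exists_nat_lt_pow_and_add_three_le_mul_log {r : ℝ} (hr : 1 < r) {N : ℕ} (hN : 2 ≤ N) :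
    ∃ n : ℕ, N < r ^ (n + 1) ∧ (n : ℝ) + 3 ≤ (1 / log r + 3 / log 2) * log N := by
  have hN2 : (2 : ℝ) ≤ N := by exact_mod_cast hN
  obtain ⟨n, hn, hn'⟩ := exists_nat_pow_near (one_le_two.trans hN2) hr
  have hlog := log_le_log (by positivity) hn
  rw [log_pow] at hlog
  have hone : 1 ≤ log N / log 2 :=
    (one_le_div (log_pos one_lt_two)).2 (log_le_log two_pos hN2)
  refine ⟨n, hn', ?_⟩
  calc (n : ℝ) + 3 ≤ log N / log r + 3 * (log N / log 2) := by
        gcongr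
        · exact (le_div_iff₀ (log_pos hr)).2 hlog
        · linarith
    _ = (1 / log r + 3 / log 2) * log N := by ring

lemma mul_le_one_of_le_add_one (hSL : S ≤ L + 1) (hγ : 0 < γ) (hroot : L * γ + S * γ ^ 2 = 1) :
    S * γ ≤ 1 := by
  have hSLR : (S : ℝ) ≤ L + 1 := by exact_mod_cast hSL
  nlinarith

lemma one_lt_add_of_root (hγ0 : 0 < γ) (hγ1 : γ < 1) (hroot : L * γ + S * γ ^ 2 = 1) :
    1 < L + S := by
  by_contra! h
  have hLS : (L : ℝ) + S ≤ 1 := by exact_mod_cast h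
  nlinarith [mul_nonneg (Nat.cast_nonneg (α := ℝ) S) hγ0.le]

end

theorem ls_vdc_discrepancy_S_eq_L_add_one_general (L S : ℕ) (hSL : S ≤ L + 1)
    (γ : ℝ) (hγ0 : 0 < γ) (hγ1 : γ < 1)
    (hroot : (L : ℝ) * γ + (S : ℝ) * γ ^ 2 = 1) :
    ∃ C₂ : ℝ, 0 < C₂ ∧ ∀ N : ℕ, 2 ≤ N →
      (N : ℝ) * discrep2 (fun n => (((n : ℝ) - 1) / N, lsSeq L S γ n)) N
        ≤ C₂ * (Real.log N) ^ 2 := by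
  have hb : 1 < L + S := one_lt_add_of_root hγ0 hγ1 hroot
  have hSγ : S * γ ≤ 1 := mul_le_one_of_le_add_one hSL hγ0 hroot
  have hr : 1 < γ⁻¹ := (one_lt_inv₀ hγ0).2 hγ1
  have hlogr := log_pos hr
  set C : ℝ := 1 / log γ⁻¹ + 3 / log 2
  have hC : 0 < C := by positivity
  refine ⟨(4 * (L + S : ℕ) + 1) * C ^ 2, mul_pos (by positivity) (pow_pos hC 2), fun N hN ↦ ?_⟩
  obtain ⟨n, hNn, hnC⟩ := exists_nat_lt_pow_and_add_three_le_mul_log hr hN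
  calc N * discrep2 (fun n ↦ (((n : ℝ) - 1) / N, lsSeq L S γ n)) N
      ≤ 4 * (L + S : ℕ) * ((n : ℝ) + 3) ^ 2 + 1 :=
        mul_discrep2_div_le (by omega) _ fun m hm y hy ↦
          abs_sum_indicator_lsSeq_sub_le (by omega) hb hγ0 hγ1.le hroot hSγ
            ((Nat.cast_le.2 hm).trans_lt hNn) hy
    _ ≤ (4 * (L + S : ℕ) + 1) * ((n : ℝ) + 3) ^ 2 := by nlinarith [Nat.cast_nonneg (α := ℝ) n]
    _ ≤ (4 * (L + S : ℕ) + 1) * (C * log N) ^ 2 := by gcongr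
    _ = (4 * (L + S : ℕ) + 1) * C ^ 2 * log N ^ 2 := by ring

/-- If `S = L+1`, the `(L,S)`-point set à la van der Corput satisfies
`N · D₂(P_{L,S}(N)) ≤ C₂ (log N)²` for all `N ≥ 2`. -/
theorem ls_vdc_discrepancy_S_eq_L_add_one (L S : ℕ) (hL : 0 < L) (hS : 0 < S)
    (hSL : S = L + 1)
    (γ : ℝ) (hγ0 : 0 < γ) (hγ1 : γ < 1)
    (hroot : (L : ℝ) * γ + (S : ℝ) * γ ^ 2 = 1) :
    ∃ C₂ : ℝ, 0 < C₂ ∧ ∀ N : ℕ, 2 ≤ N →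
      (N : ℝ) * discrep2 (fun n => (((n : ℝ) - 1) / N, lsSeq L S γ n)) N
        ≤ C₂ * (Real.log N) ^ 2 :=
  ls_vdc_discrepancy_S_eq_L_add_one_general L S hSL.le γ hγ0 hγ1 hroot
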